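/- Elliptic Jackson summation (Frenkel–Turaev): for every integer k ≥ 0 and all α, β, γ, z ∈ ℂ such that every bracket appearing in a denominator is nonzero, one has ₁₀V₉(β−γ−k; −k, α−γ, −α−γ+1−k, β+rz, β−rz) = [γ−β, γ+β, α+rz, α−rz]_k / [α−β, α+β, γ+rz, γ−rz]_k. -/

import Mathlib

noncomputable section

open Complex Finset

namespace Ell

/-- `x^s = exp(-iπ s /(r τ))`. -/
def xp (τ : ℂ) (r : ℝ) (s : ℂ) : ℂ :=
  Complex.exp (-Complex.I * (Real.pi : ℂ) * s / ((r : ℂ) * τ))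

/-- `Θ_p(z) = ∏_{j ≥ 0} (1 - z p^j)(1 - p^{j+1}/z)(1 - p^{j+1})`. -/
def Theta (p z : ℂ) : ℂ :=
  ∏' j : ℕ, ((1 - z * p ^ j) * (1 - p ^ (j + 1) / z) * (1 - p ^ (j + 1)))

/-- The bracket `[u] = x^{u²/r - u} Θ_p(x^{2u})` with `p = x^{2r}`. -/
def br (τ : ℂ) (r : ℝ) (u : ℂ) : ℂ :=
  xp τ r (u ^ 2 / (r : ℂ) - u) * Theta (xp τ r (2 * (r : ℂ))) (xp τ r (2 * u))

/-- Elliptic shifted factorial `[u]_n = ∏_{j=0}^{n-1} [u+j]`. -/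
def brF (τ : ℂ) (r : ℝ) (u : ℂ) (n : ℕ) : ℂ :=
  ∏ j ∈ Finset.range n, br τ r (u + (j : ℂ))

/-- Elliptic binomial coefficient `C_n^k(α,β,γ)`. -/
def Cnk (τ : ℂ) (r : ℝ) (k n : ℕ) (α β γ : ℂ) : ℂ :=
  brF τ r 1 k / (brF τ r 1 n * brF τ r 1 (k - n)) *
    (brF τ r (α - γ) n * brF τ r (α + γ + (k : ℂ) - (n : ℂ)) n *
      brF τ r (α - β) (k - n) * brF τ r (α + β + (n : ℂ)) (k - n)) /
    (brF τ r (β - γ + (n : ℂ) - (k : ℂ)) n * brF τ r (γ - β - (n : ℂ)) (k - n) *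
      brF τ r (β + γ) k)

/-- The elliptic 6j-symbol `R_n^m(α,β,γ,δ;k)`. -/
def Rnm (τ : ℂ) (r : ℝ) (k n m : ℕ) (α β γ δ : ℂ) : ℂ :=
  ∑ j ∈ Finset.range (min n m + 1),
    Cnk τ r n j α γ (β + (k : ℂ) - (n : ℂ)) * Cnk τ r (k - j) (m - j) β (γ + (j : ℂ)) δ

/-- Terminating very-well-poised elliptic hypergeometric sum with explicit
truncation `N`:  `Σ_{j=0}^N ([u₀+2j]/[u₀]) ([u₀]_j/[1]_j) ∏ᵢ [uᵢ]_j/[u₀+1-uᵢ]_j`. -/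
def Vsum (τ : ℂ) (r : ℝ) (u₀ : ℂ) (us : List ℂ) (N : ℕ) : ℂ :=
  ∑ j ∈ Finset.range (N + 1),
    br τ r (u₀ + 2 * (j : ℂ)) / br τ r u₀ * (brF τ r u₀ j / brF τ r 1 j) *
      (us.map fun ui => brF τ r ui j / brF τ r (u₀ + 1 - ui) j).prod

/-- "Every bracket appearing in a denominator of `C_n^k(·,β,γ)` is nonzero". -/
def CdenomNZ (τ : ℂ) (r : ℝ) (k n : ℕ) (β γ : ℂ) : Prop :=
  brF τ r 1 n ≠ 0 ∧ brF τ r 1 (k - n) ≠ 0 ∧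
    brF τ r (β - γ + (n : ℂ) - (k : ℂ)) n ≠ 0 ∧
    brF τ r (γ - β - (n : ℂ)) (k - n) ≠ 0 ∧ brF τ r (β + γ) k ≠ 0

/-- "Every bracket appearing in a denominator of `R_n^m(α,β,γ,δ;k)` is nonzero". -/
def RdenomNZ (τ : ℂ) (r : ℝ) (k n m : ℕ) (β γ δ : ℂ) : Prop :=
  ∀ j ≤ min n m,
    CdenomNZ τ r n j γ (β + (k : ℂ) - (n : ℂ)) ∧
      CdenomNZ τ r (k - j) (m - j) (γ + (j : ℂ)) δ

/-- Jacobi theta `ϑ₁(v|σ)`. -/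
def th1 (v σ : ℂ) : ℂ :=
  2 * Complex.exp (2 * (Real.pi : ℂ) * Complex.I * σ / 8) *
    (∏' n : ℕ, (1 - Complex.exp (2 * (Real.pi : ℂ) * Complex.I * σ) ^ (n + 1))) *
    Complex.sin ((Real.pi : ℂ) * v) *
    ∏' n : ℕ,
      (1 - 2 * Complex.exp (2 * (Real.pi : ℂ) * Complex.I * σ) ^ (n + 1) *
            Complex.cos (2 * (Real.pi : ℂ) * v) +
        Complex.exp (2 * (Real.pi : ℂ) * Complex.I * σ) ^ (2 * (n + 1)))

/-- Jacobi theta `ϑ₀(v|σ)`. -/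
def th0 (v σ : ℂ) : ℂ :=
  -Complex.I * Complex.exp ((Real.pi : ℂ) * Complex.I * (v + σ / 4)) * th1 (v + σ / 2) σ

/-- Jacobi theta `ϑ₂(v|σ)`. -/
def th2 (v σ : ℂ) : ℂ := th1 (v + 1 / 2) σ

/-- Jacobi theta `ϑ₃(v|σ)`. -/
def th3 (v σ : ℂ) : ℂ :=
  Complex.exp ((Real.pi : ℂ) * Complex.I * (v + σ / 4)) * th1 (v + (σ + 1) / 2) σ

/-- Intertwining vector component `ψ_ε(u)^a_b`, `ε ∈ {1, -1}`. -/
def psi (τ : ℂ) (r : ℝ) (u : ℂ) (ε : ℤ) (a b : ℤ) : ℂ :=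
  if ε = 1 then th0 ((((a : ℂ) - (b : ℂ)) * u + (a : ℂ)) / (2 * (r : ℂ))) (τ / 2)
  else th3 ((((a : ℂ) - (b : ℂ)) * u + (a : ℂ)) / (2 * (r : ℂ))) (τ / 2)

/-- The constant `C = x^{-r/4} e^{-iπ/4} τ^{1/2}`. -/
def Cc (τ : ℂ) (r : ℝ) : ℂ :=
  xp τ r (-(r : ℂ) / 4) * Complex.exp (-(Real.pi : ℂ) * Complex.I / 4) * τ ^ (1 / 2 : ℂ)

/-- Dual intertwining vector component `ψ*_ε(u)^a_b = -ε(a-b) C² ψ_{-ε}(u-1)^a_b/(2[b][u])`. -/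
def psiStar (τ : ℂ) (r : ℝ) (u : ℂ) (ε : ℤ) (a b : ℤ) : ℂ :=
  -(ε : ℂ) * ((a : ℂ) - (b : ℂ)) * Cc τ r ^ 2 * psi τ r (u - 1) (-ε) a b /
    (2 * br τ r (b : ℂ) * br τ r u)

/-- Sign attached to a boolean. -/
def sg (b : Bool) : ℤ := if b then 1 else -1

/-- Canonical path from `a`: up for `j ≤ n`, down afterwards. -/
def cpathZ (a n : ℤ) (j : ℕ) : ℤ := if (j : ℤ) ≤ n then a + j else a + 2 * n - j

/-- Admissibility: `a - b ∈ {-k, -k+2, …, k}`. -/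
def adm (k : ℕ) (a b : ℤ) : Prop := (a - b).natAbs ≤ k ∧ (a - b - (k : ℤ)) % 2 = 0

instance (k : ℕ) (a b : ℤ) : Decidable (adm k a b) := by unfold adm; infer_instance

/-- Fused intertwining vector component `ψ^{(k)}_μ(u)^a_b` (zero if `a,b` not admissible). -/
def psiF (τ : ℂ) (r : ℝ) (k : ℕ) (μ : ℤ) (u : ℂ) (a b : ℤ) : ℂ :=
  if adm k a b then
    ∑ ε ∈ Finset.univ.filter fun ε : Fin k → Bool => (∑ j, sg (ε j)) = μ,
      ∏ j : Fin k,
        psi τ r (u + (k : ℂ) - (((j : ℕ) + 1 : ℕ) : ℂ)) (sg (ε j))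
          (cpathZ a (((k : ℤ) - (a - b)) / 2) (j : ℕ))
          (cpathZ a (((k : ℤ) - (a - b)) / 2) ((j : ℕ) + 1))
  else 0

/-- Partial-sum path attached to a sign sequence `δ`, starting at `a`. -/
def spath (k : ℕ) (a : ℤ) (δ : Fin k → Bool) (j : ℕ) : ℤ :=
  a + ∑ i ∈ Finset.range j, if h : i < k then sg (δ ⟨i, h⟩) else 0

/-- Fused dual intertwining vector component `ψ*^{(k)}_μ(u)^b_a`
(sum over all admissible paths from `a` to `b`; zero if not admissible). -/
def psiStarF (τ : ℂ) (r : ℝ) (k : ℕ) (μ : ℤ) (u : ℂ) (b a : ℤ) : ℂ :=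
  if adm k a b then
    ∑ δ ∈ Finset.univ.filter fun δ : Fin k → Bool => (∑ j, sg (δ j)) = b - a,
      ∏ j : Fin k,
        psiStar τ r (u + (k : ℂ) - (((j : ℕ) + 1 : ℕ) : ℂ))
          (if ((j : ℕ) + 1 : ℤ) ≤ ((k : ℤ) + μ) / 2 then 1 else -1)
          (spath k a δ ((j : ℕ) + 1)) (spath k a δ (j : ℕ))
  else 0

/-- The `L`-matrix `L^{(k)}(a,b;c,d|u) = Σ_μ ψ*^{(k)}_μ(u)^d_c ψ^{(k)}_μ(u)^a_b`. -/
def Lk (τ : ℂ) (r : ℝ) (k : ℕ) (u : ℂ) (a b c d : ℤ) : ℂ :=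
  ∑ i ∈ Finset.range (k + 1),
    psiStarF τ r k ((k : ℤ) - 2 * (i : ℤ)) u d c * psiF τ r k ((k : ℤ) - 2 * (i : ℤ)) u a b

/-- Normalized face weight `W̄(a,b;d,c|u)` (arguments ordered (NW, NE; SW, SE)). -/
def Wb (τ : ℂ) (r : ℝ) (u : ℂ) (a b d c : ℤ) : ℂ :=
  if b = a + 1 ∧ d = a + 1 ∧ c = a + 2 then 1
  else if b = a - 1 ∧ d = a - 1 ∧ c = a - 2 then 1
  else if b = a + 1 ∧ d = a + 1 ∧ c = a then
    br τ r ((a : ℂ) - u) * br τ r 1 / (br τ r (a : ℂ) * br τ r (1 + u))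
  else if b = a - 1 ∧ d = a - 1 ∧ c = a then
    br τ r ((a : ℂ) + u) * br τ r 1 / (br τ r (a : ℂ) * br τ r (1 + u))
  else if b = a + 1 ∧ d = a - 1 ∧ c = a then
    br τ r ((a : ℂ) + 1) * br τ r u / (br τ r (a : ℂ) * br τ r (1 + u))
  else if b = a - 1 ∧ d = a + 1 ∧ c = a then
    br τ r ((a : ℂ) - 1) * br τ r u / (br τ r (a : ℂ) * br τ r (1 + u))
  else 0

/-- Sequence with prescribed endpoints `d`, `c` and free interior values `f`. -/
def seqI (k : ℕ) (d c : ℤ) (f : Fin (k - 1) → ℤ) (j : ℕ) : ℤ :=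
  if h0 : j = 0 then d
  else if hj : j < k then f ⟨j - 1, by omega⟩ else c

/-- Fused face weight `W^{(k,1)}(a,b;d,c|u)`. -/
def Wk1 (τ : ℂ) (r : ℝ) (k : ℕ) (u : ℂ) (a b d c : ℤ) : ℂ :=
  if adm k a b then
    ∑' f : Fin (k - 1) → ℤ,
      ∏ j ∈ Finset.range k,
        Wb τ r (u + (k : ℂ) - ((j : ℂ) + 1))
          (cpathZ a (((k : ℤ) - (a - b)) / 2) j)
          (cpathZ a (((k : ℤ) - (a - b)) / 2) (j + 1))
          (seqI k d c f j) (seqI k d c f (j + 1))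
  else 0

/-- Fused face weight `W^{(k,l)}(a,b;d,c|u)`. -/
def Wkl (τ : ℂ) (r : ℝ) (k l : ℕ) (u : ℂ) (a b d c : ℤ) : ℂ :=
  if adm l b c then
    ∑' g : Fin (l - 1) → ℤ,
      ∏ i ∈ Finset.range l,
        Wk1 τ r k (u - (l : ℂ) + ((i : ℂ) + 1))
          (seqI l a d g i) (cpathZ b (((l : ℤ) - (b - c)) / 2) i)
          (seqI l a d g (i + 1)) (cpathZ b (((l : ℤ) - (b - c)) / 2) (i + 1))
  else 0

/-- Eight-vertex weight `ā(u)`. -/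
def aw (τ : ℂ) (r : ℝ) (u : ℂ) : ℂ :=
  th2 (1 / (2 * (r : ℂ))) (τ / 2) * th2 (u / (2 * (r : ℂ))) (τ / 2) /
    (th2 0 (τ / 2) * th2 ((1 + u) / (2 * (r : ℂ))) (τ / 2))

/-- Eight-vertex weight `b̄(u)`. -/
def bw (τ : ℂ) (r : ℝ) (u : ℂ) : ℂ :=
  th2 (1 / (2 * (r : ℂ))) (τ / 2) * th1 (u / (2 * (r : ℂ))) (τ / 2) /
    (th2 0 (τ / 2) * th1 ((1 + u) / (2 * (r : ℂ))) (τ / 2))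

/-- Eight-vertex weight `c̄(u)`. -/
def cw (τ : ℂ) (r : ℝ) (u : ℂ) : ℂ :=
  th1 (1 / (2 * (r : ℂ))) (τ / 2) * th2 (u / (2 * (r : ℂ))) (τ / 2) /
    (th2 0 (τ / 2) * th1 ((1 + u) / (2 * (r : ℂ))) (τ / 2))

/-- Eight-vertex weight `d̄(u)`. -/
def dw (τ : ℂ) (r : ℝ) (u : ℂ) : ℂ :=
  -(th1 (1 / (2 * (r : ℂ))) (τ / 2) * th1 (u / (2 * (r : ℂ))) (τ / 2)) /
    (th2 0 (τ / 2) * th2 ((1 + u) / (2 * (r : ℂ))) (τ / 2))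

/-- The normalized eight-vertex `R`-matrix entry `R̄(u)_{(ε₁,ε₂),(ε₁',ε₂')}`. -/
def Rbar (τ : ℂ) (r : ℝ) (u : ℂ) (e1 e2 e1' e2' : ℤ) : ℂ :=
  if e1' = e1 ∧ e2' = e2 ∧ e1 = e2 then aw τ r u
  else if e1' = e1 ∧ e2' = e2 ∧ e1 = -e2 then bw τ r u
  else if e1' = e2 ∧ e2' = e1 ∧ e1 = -e2 then cw τ r u
  else if e1' = -e1 ∧ e2' = -e2 ∧ e1 = e2 then dw τ r u
  else 0

/-- Sklyanin standard-basis vector `v_+(z)`. -/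
def vp (τ z : ℂ) : ℂ := th3 (2 * z) (2 * τ) - th2 (2 * z) (2 * τ)

/-- Sklyanin standard-basis vector `v_-(z)`. -/
def vm (τ z : ℂ) : ℂ := th3 (2 * z) (2 * τ) + th2 (2 * z) (2 * τ)

/-!
By Jacobi's triple product the bracket is, up to a constant, an alternating Gaussian series
`∑ₙ (-1)ⁿ exp(πiσ(s+n)²)` with `σ = -1/τ`. Splitting the double series for `[a+x][a-x]` according to
the parity of the index difference writes it as `B(a)A(x) - A(a)B(x)`, and every function with this
property satisfies Weierstrass's three-term relation.

The three-term relation alone implies the summation formula. Lengthening `[α+x]_k[α-x]_k` by one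
factor and applying the relation to the new factor gives, by induction on `k`, an expansion in the
products `[β+x]_n[β-x]_n[γ+x]_m[γ-x]_m`, `n + m = k`; the Pascal-type recurrence of its coefficients
is another instance of the relation. Dividing by `[γ+x]_k[γ-x]_k` and reflecting the shifted
factorials turns the expansion into the very-well-poised sum.
-/

section ShiftedFactorial

variable {A K : Type*} [CommRing A] [CommRing K]

/-- The shifted factorial `[u]_n = ∏_{j<n} [u+j]` for an arbitrary bracket `[u] = f u`; at
`f = br τ r` it is definitionally `brF τ r u n`. -/
def shiftedFactorial (f : A → K) (u : A) (n : ℕ) : K := ∏ j ∈ range n, f (u + j)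

lemma shiftedFactorial_zero (f : A → K) (u : A) : shiftedFactorial f u 0 = 1 :=
  prod_range_zero _

lemma shiftedFactorial_succ (f : A → K) (u : A) (n : ℕ) :
    shiftedFactorial f u (n + 1) = shiftedFactorial f u n * f (u + n) :=
  prod_range_succ _ _

lemma shiftedFactorial_add (f : A → K) (u : A) (m n : ℕ) :
    shiftedFactorial f u (m + n) = shiftedFactorial f u m * shiftedFactorial f (u + m) n := by
  simp only [shiftedFactorial, prod_range_add, Nat.cast_add, add_assoc]

lemma shiftedFactorial_succ' (f : A → K) (u : A) (n : ℕ) :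
    shiftedFactorial f u (n + 1) = f u * shiftedFactorial f (u + 1) n := by
  rw [add_comm n 1, shiftedFactorial_add]
  simp [shiftedFactorial]

lemma shiftedFactorial_reflect {f : A → K} (hf : ∀ u, f (-u) = -f u) (u : A) (n : ℕ) :
    shiftedFactorial f (1 - n - u) n = (-1) ^ n * shiftedFactorial f u n := by
  induction n with
  | zero => simp [shiftedFactorial]
  | succ n ih =>
    have hshift : (1 - (n + 1 : ℕ) - u + 1 : A) = 1 - n - u := by push_cast; ring
    have hneg : (1 - (n + 1 : ℕ) - u : A) = -(u + n) := by push_cast; ring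
    rw [shiftedFactorial_succ', hshift, ih, shiftedFactorial_succ, hneg, hf]
    ring

lemma shiftedFactorial_reflect_mul {f : A → K} (hf : ∀ u, f (-u) = -f u) (u : A) (n m : ℕ) :
    shiftedFactorial f (1 - (n + m) - u) n * shiftedFactorial f u m =
      (-1) ^ n * shiftedFactorial f u (n + m) := by
  have hshift : (1 - (n + m) - u : A) = 1 - n - (u + m) := by ring
  rw [hshift, shiftedFactorial_reflect hf, add_comm n m, shiftedFactorial_add]
  ring

lemma shiftedFactorial_window_succ (f : A → K) (δ : A) (k : ℕ) :
    shiftedFactorial f (δ - (k + 1 : ℕ)) (2 * (k + 1) + 1) =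
      shiftedFactorial f (δ - k) (2 * k + 1) * (f (δ - k - 1) * f (δ + k + 1)) := by
  rw [show 2 * (k + 1) + 1 = 2 * k + 1 + 1 + 1 by ring, shiftedFactorial_succ,
    shiftedFactorial_succ']
  push_cast
  ring_nf

/-- The symmetric product `[a+x]_n [a-x]_n`, the basis function in which Jackson's summation is
an expansion formula. -/
def symmFactorial (f : A → K) (x a : A) (n : ℕ) : K :=
  shiftedFactorial f (a + x) n * shiftedFactorial f (a - x) n

lemma symmFactorial_succ (f : A → K) (x a : A) (n : ℕ) :
    symmFactorial f x a (n + 1) = symmFactorial f x a n * (f (a + n + x) * f (a + n - x)) := by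
  simp only [symmFactorial, shiftedFactorial_succ, add_right_comm a x, sub_add_eq_add_sub a x]
  ring

/-- Weierstrass's three-term relation, the only property of the bracket that Jackson's summation
depends on. Besides `br τ r` it holds for `f u = u` and `f u = sin u`. -/
def ThreeTermRelation (f : A → K) : Prop :=
  ∀ a b c d, f (a + d) * f (a - d) * (f (b + c) * f (b - c)) =
    f (b + d) * f (b - d) * (f (a + c) * f (a - c)) -
      f (c + d) * f (c - d) * (f (a + b) * f (a - b))

end ShiftedFactorial

lemma sum_antidiagonal_succ_of_pascal {M : Type*} [AddCommMonoid M] {C U V : ℕ → ℕ → M} {k : ℕ}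
    (hleft : C 0 (k + 1) = V 0 k) (hright : C (k + 1) 0 = U k 0)
    (hmid : ∀ n m, n + m + 1 = k → C (n + 1) (m + 1) = U n (m + 1) + V (n + 1) m) :
    ∑ q ∈ antidiagonal (k + 1), C q.1 q.2 = ∑ q ∈ antidiagonal k, (U q.1 q.2 + V q.1 q.2) := by
  cases k with
  | zero => simp [Nat.sum_antidiagonal_succ, hleft, hright, add_comm]
  | succ k =>
    have hinner : ∑ q ∈ antidiagonal k, C (q.1 + 1) (q.2 + 1) =
        ∑ q ∈ antidiagonal k, (U q.1 (q.2 + 1) + V (q.1 + 1) q.2) :=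
      sum_congr rfl fun q hq => hmid q.1 q.2 (by rw [mem_antidiagonal.mp hq])
    rw [sum_add_distrib, Nat.sum_antidiagonal_succ, Nat.sum_antidiagonal_succ', hinner,
      Nat.sum_antidiagonal_succ' (f := fun q => U q.1 q.2),
      Nat.sum_antidiagonal_succ (f := fun q => V q.1 q.2), hleft, hright, sum_add_distrib]
    abel

section ExpansionCoefficients

variable {A K : Type*} [CommRing A] [Field K] {f : A → K}

/-- The part of the expansion coefficients that depends on `β` and `γ` only, through
`δ = β - γ`. The brackets `[δ+i]`, `|i| ≤ n + m`, in the denominator of `Cnk` have been cleared,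
which leaves the two shifted factorials in the numerator. -/
def differenceWeight (f : A → K) (δ : A) (n m : ℕ) : K :=
  (-1) ^ m * (shiftedFactorial f (δ - (n + m)) n * shiftedFactorial f (δ + n + 1) m) /
    (shiftedFactorial f 1 n * shiftedFactorial f 1 m)

lemma differenceWeight_swap (hodd : ∀ u, f (-u) = -f u) (δ : A) (n m : ℕ) :
    differenceWeight f (-δ) m n = differenceWeight f δ n m := by
  have hlow : shiftedFactorial f (-δ + m + 1) n =
      (-1) ^ n * shiftedFactorial f (δ - (n + m)) n := by
    rw [← shiftedFactorial_reflect hodd]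
    ring_nf
  have hhigh : shiftedFactorial f (-δ - (m + n)) m =
      (-1) ^ m * shiftedFactorial f (δ + n + 1) m := by
    rw [← shiftedFactorial_reflect hodd]
    ring_nf
  have hsign : ((-1 : K) ^ n) ^ 2 = 1 := by rw [← pow_mul, mul_comm, pow_mul, neg_one_sq, one_pow]
  rw [differenceWeight, differenceWeight, hlow, hhigh]
  linear_combination (-1) ^ m *
    (shiftedFactorial f (δ - (n + m)) n * shiftedFactorial f (δ + n + 1) m) /
    (shiftedFactorial f 1 n * shiftedFactorial f 1 m) * hsign

lemma differenceWeight_mul (δ : A) {n : ℕ} (m : ℕ) (hn : f (1 + n) ≠ 0) :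
    differenceWeight f δ n m * (f (δ - (n + m) - 1) * f (δ + (n + m) + 1)) =
      differenceWeight f δ (n + 1) m * (f (1 + n) * f (δ + n + 1)) := by
  have hone : (shiftedFactorial f 1 n)⁻¹ = f (1 + n) * (shiftedFactorial f 1 (n + 1))⁻¹ := by
    rw [shiftedFactorial_succ, mul_inv, mul_left_comm, mul_inv_cancel₀ hn, mul_one]
  have hlow : shiftedFactorial f (δ - ((n + 1 : ℕ) + m)) (n + 1) =
      f (δ - (n + m) - 1) * shiftedFactorial f (δ - (n + m)) n := by
    rw [shiftedFactorial_succ']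
    push_cast
    ring_nf
  have hhigh : shiftedFactorial f (δ + n + 1) m * f (δ + (n + m) + 1) =
      f (δ + n + 1) * shiftedFactorial f (δ + (n + 1 : ℕ) + 1) m := by
    have h := (shiftedFactorial_succ f (δ + n + 1) m).symm.trans (shiftedFactorial_succ' ..)
    push_cast
    ring_nf at h ⊢
    exact h
  simp only [differenceWeight, div_eq_mul_inv, mul_inv, hone, hlow]
  linear_combination (-1) ^ m * (f (δ - (n + m) - 1) * shiftedFactorial f (δ - (n + m)) n) *
    (f (1 + n) * (shiftedFactorial f 1 (n + 1))⁻¹ * (shiftedFactorial f 1 m)⁻¹) * hhigh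

/-- The part of the expansion coefficients that depends on `α`. -/
def parameterWeight (f : A → K) (α β γ : A) (n m : ℕ) : K :=
  shiftedFactorial f (α - γ) n * shiftedFactorial f (α + γ + m) n *
    (shiftedFactorial f (α - β) m * shiftedFactorial f (α + β + n) m)

lemma parameterWeight_swap (f : A → K) (α β γ : A) (n m : ℕ) :
    parameterWeight f α γ β m n = parameterWeight f α β γ n m :=
  mul_comm _ _

/-- The common factor of `parameterWeight` at `(n + 1, m + 1)` and of its values at `(n, m + 1)` and
`(n + 1, m)` once these are multiplied by `f (α - γ + n)` and `f (α - β + m)`. -/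
def commonParameterWeight (f : A → K) (α β γ : A) (n m : ℕ) : K :=
  shiftedFactorial f (α - γ) (n + 1) * shiftedFactorial f (α + γ + m + 1) n *
    (shiftedFactorial f (α - β) (m + 1) * shiftedFactorial f (α + β + n + 1) m)

lemma commonParameterWeight_swap (f : A → K) (α β γ : A) (n m : ℕ) :
    commonParameterWeight f α γ β m n = commonParameterWeight f α β γ n m :=
  mul_comm _ _

lemma parameterWeight_succ_succ (f : A → K) (α β γ : A) (n m : ℕ) :
    parameterWeight f α β γ (n + 1) (m + 1) =
      commonParameterWeight f α β γ n m * (f (α + γ + m + 1 + n) * f (α + β + n + 1 + m)) := by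
  simp only [parameterWeight, commonParameterWeight, Nat.cast_add_one, ← add_assoc]
  rw [shiftedFactorial_succ f (α + γ + m + 1), shiftedFactorial_succ f (α + β + n + 1)]
  ring

lemma parameterWeight_succ_right (f : A → K) (α β γ : A) (n m : ℕ) :
    parameterWeight f α β γ n (m + 1) * f (α - γ + n) =
      commonParameterWeight f α β γ n m * f (α + β + n) := by
  simp only [parameterWeight, commonParameterWeight, Nat.cast_add_one, ← add_assoc]
  rw [shiftedFactorial_succ f (α - γ), shiftedFactorial_succ' f (α + β + n)]
  ring

/-- The coefficient of `symmFactorial f x β n * symmFactorial f x γ m` in the expansion of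
`symmFactorial f x α (n + m)`, up to factors that depend on `n + m` only; these factors clear the
denominators of the corresponding `Cnk` that involve `β` and `γ`. -/
def expansionCoeff (f : A → K) (α β γ : A) (n m : ℕ) : K :=
  differenceWeight f (β - γ) n m * parameterWeight f α β γ n m * f (β - γ + n - m)

lemma expansionCoeff_swap (hodd : ∀ u, f (-u) = -f u) (α β γ : A) (n m : ℕ) :
    expansionCoeff f α γ β m n = -expansionCoeff f α β γ n m := by
  have hdiff : γ - β + m - n = -(β - γ + n - m) := by ring
  rw [expansionCoeff, expansionCoeff, hdiff, hodd, parameterWeight_swap, ← neg_sub β γ,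
    differenceWeight_swap hodd, mul_neg]

/-- The contribution of the `(n, m)` term to the `(n + 1, m)` term when `symmFactorial f x α` is
lengthened by one factor. The contribution to the `(n, m + 1)` term is obtained by exchanging
`(β, n)` with `(γ, m)`, up to sign. -/
def stepCoeff (f : A → K) (α β γ : A) (n m : ℕ) : K :=
  differenceWeight f (β - γ) (n + 1) m * (f (1 + n) * f (β - γ + n + 1)) *
    (parameterWeight f α β γ n m * f (α - γ + n)) * f (α + γ + n + 2 * m)

lemma expansionCoeff_succ_zero (f : A → K) (α β γ : A) (n : ℕ) :
    f (1 + n) * expansionCoeff f α β γ (n + 1) 0 = stepCoeff f α β γ n 0 := by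
  simp only [expansionCoeff, stepCoeff, parameterWeight, shiftedFactorial_succ,
    shiftedFactorial_zero]
  push_cast
  ring_nf

lemma expansionCoeff_zero_succ (hodd : ∀ u, f (-u) = -f u) (α β γ : A) (m : ℕ) :
    f (1 + m) * expansionCoeff f α β γ 0 (m + 1) = -stepCoeff f α γ β m 0 := by
  rw [← expansionCoeff_succ_zero, expansionCoeff_swap hodd, mul_neg]

lemma stepCoeff_eq (α β γ : A) {n : ℕ} (m : ℕ) (hn : f (1 + n) ≠ 0) :
    stepCoeff f α β γ n m =
      differenceWeight f (β - γ) n m * (f (β - γ - (n + m) - 1) * f (β - γ + (n + m) + 1)) *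
        (parameterWeight f α β γ n m * f (α - γ + n)) * f (α + γ + n + 2 * m) := by
  rw [stepCoeff, differenceWeight_mul _ _ hn]

lemma stepCoeff_swap_eq (hodd : ∀ u, f (-u) = -f u) (α β γ : A) (n : ℕ) {m : ℕ}
    (hm : f (1 + m) ≠ 0) :
    stepCoeff f α γ β m n =
      differenceWeight f (β - γ) n m * (f (β - γ - (n + m) - 1) * f (β - γ + (n + m) + 1)) *
        (parameterWeight f α β γ n m * f (α - β + m)) * f (α + β + m + 2 * n) := by
  have hlow : γ - β - (m + n) - 1 = -(β - γ + (n + m) + 1) := by ring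
  have hhigh : γ - β + (m + n) + 1 = -(β - γ - (n + m) - 1) := by ring
  rw [stepCoeff_eq α γ β n hm, hlow, hhigh, hodd, hodd, parameterWeight_swap, ← neg_sub β γ,
    differenceWeight_swap hodd]
  ring

end ExpansionCoefficients

section Expansion

variable {A K : Type*} [Field A] [NeZero (2 : A)] [Field K] {f : A → K}

lemma ThreeTermRelation.odd (hf : ThreeTermRelation f) (u : A) : f (-u) = -f u := by
  by_cases hzero : ∀ w, f w = 0
  · rw [hzero, hzero, neg_zero]
  obtain ⟨w, hw⟩ := not_forall.mp hzero
  obtain ⟨c, rfl⟩ : ∃ c, u = w - (c + c) := ⟨(w - u) / 2, by rw [add_halves]; ring⟩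
  have h := hf w (w - c) c 0
  have h' := hf w c (w - c) 0
  have hsum : f w * f w * f w * (f (-(w - (c + c))) + f (w - (c + c))) = 0 := by
    ring_nf at h h' ⊢
    linear_combination h + h'
  exact eq_neg_of_add_eq_zero_left
    ((mul_eq_zero.mp hsum).resolve_left (mul_ne_zero (mul_ne_zero hw hw) hw))

lemma ThreeTermRelation.expansionCoeff_mul (hf : ThreeTermRelation f) (α β γ x : A) {n m : ℕ}
    (hn : f (1 + n) ≠ 0) (hm : f (1 + m) ≠ 0) :
    expansionCoeff f α β γ n m * (f (β - γ - (n + m) - 1) * f (β - γ + (n + m) + 1)) *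
        (f (β + γ + (n + m)) * (f (α + (n + m) + x) * f (α + (n + m) - x))) =
      stepCoeff f α β γ n m * (f (β + n + x) * f (β + n - x)) -
        stepCoeff f α γ β m n * (f (γ + m + x) * f (γ + m - x)) := by
  have hthree := hf (α + (n + m)) (β + n) (γ + m) x
  have hsum : β + n + (γ + m) = β + γ + (n + m) := by ring
  have hdiff : β + n - (γ + m) = β - γ + n - m := by ring
  have hγ_sum : α + (n + m) + (γ + m) = α + γ + n + 2 * m := by ring
  have hγ_diff : α + (n + m) - (γ + m) = α - γ + n := by ring
  have hβ_sum : α + (n + m) + (β + n) = α + β + m + 2 * n := by ring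
  have hβ_diff : α + (n + m) - (β + n) = α - β + m := by ring
  rw [hsum, hdiff, hγ_sum, hγ_diff, hβ_sum, hβ_diff] at hthree
  rw [stepCoeff_eq α β γ m hn, stepCoeff_swap_eq hf.odd α β γ n hm, expansionCoeff]
  linear_combination differenceWeight f (β - γ) n m * parameterWeight f α β γ n m *
    (f (β - γ - (n + m) - 1) * f (β - γ + (n + m) + 1)) * hthree

lemma ThreeTermRelation.pascal (hf : ThreeTermRelation f) (α β γ s t : A) :
    f (1 + (s + t + 1)) * f (β - γ + s - t) * (f (α + γ + t + 1 + s) * f (α + β + s + 1 + t)) =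
      f (1 + s) * f (β - γ + s + 1) * (f (α + β + s) * f (α + γ + s + 2 * (t + 1))) -
        f (1 + t) * f (γ - β + t + 1) * (f (α + γ + t) * f (α + β + t + 2 * (s + 1))) := by
  obtain ⟨d, rfl⟩ : ∃ d, β = γ + (d + d) := ⟨(β - γ) / 2, by rw [add_halves]; ring⟩
  have hthree := hf (α + γ + d + (s + t + 1)) (d + s + 1) (d - t - 1) d
  have hneg : d - t - 1 - d = -(1 + t) := by ring
  have hneg' : d - t - 1 + d = -(γ - (γ + (d + d)) + t + 1) := by ring
  rw [hneg, hneg', hf.odd, hf.odd] at hthree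
  linear_combination (norm := ring_nf) hthree

lemma ThreeTermRelation.expansionCoeff_succ_succ (hf : ThreeTermRelation f) (α β γ : A)
    (n m : ℕ) :
    f (1 + (n + m + 1 : ℕ)) * expansionCoeff f α β γ (n + 1) (m + 1) =
      stepCoeff f α β γ n (m + 1) - stepCoeff f α γ β m (n + 1) := by
  simp only [stepCoeff, parameterWeight_succ_right, expansionCoeff, parameterWeight_succ_succ,
    commonParameterWeight_swap f α β γ, ← neg_sub β γ, differenceWeight_swap hf.odd]
  have hpascal := hf.pascal α β γ n m
  have hshift : β - γ + (n + 1 : ℕ) - (m + 1 : ℕ) = β - γ + n - m := by push_cast; ring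
  rw [hshift, neg_sub]
  push_cast
  linear_combination differenceWeight f (β - γ) (n + 1) (m + 1) *
    commonParameterWeight f α β γ n m * hpascal

lemma ThreeTermRelation.sum_expansionCoeff_succ (hf : ThreeTermRelation f) (α β γ x : A) {k : ℕ}
    (hk : ∀ i ≤ k, f (1 + i) ≠ 0) :
    f (1 + k) * ∑ q ∈ antidiagonal (k + 1),
        expansionCoeff f α β γ q.1 q.2 * (symmFactorial f x β q.1 * symmFactorial f x γ q.2) =
      (∑ q ∈ antidiagonal k,
        expansionCoeff f α β γ q.1 q.2 * (symmFactorial f x β q.1 * symmFactorial f x γ q.2)) *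
        (f (β - γ - k - 1) * f (β - γ + k + 1) *
          (f (β + γ + k) * (f (α + k + x) * f (α + k - x)))) := by
  have hpascal := sum_antidiagonal_succ_of_pascal (k := k)
    (C := fun n m => f (1 + k) * expansionCoeff f α β γ n m *
      (symmFactorial f x β n * symmFactorial f x γ m))
    (U := fun n m => stepCoeff f α β γ n m *
      (symmFactorial f x β (n + 1) * symmFactorial f x γ m))
    (V := fun n m => -stepCoeff f α γ β m n *
      (symmFactorial f x β n * symmFactorial f x γ (m + 1)))
    (by rw [expansionCoeff_zero_succ hf.odd]) (by rw [expansionCoeff_succ_zero])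
    (by rintro n m rfl; rw [hf.expansionCoeff_succ_succ]; ring)
  simp only [mul_assoc (f (1 + k)), ← mul_sum] at hpascal
  rw [hpascal, sum_mul]
  refine sum_congr rfl fun q hq => ?_
  obtain rfl := mem_antidiagonal.mp hq
  have hterm := hf.expansionCoeff_mul α β γ x (hk q.1 (by omega)) (hk q.2 (by omega))
  rw [symmFactorial_succ, symmFactorial_succ]
  push_cast
  linear_combination -(symmFactorial f x β q.1 * symmFactorial f x γ q.2) * hterm

theorem ThreeTermRelation.symmFactorial_expansion (hf : ThreeTermRelation f) (α β γ x : A) {k : ℕ}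
    (hk : shiftedFactorial f 1 k ≠ 0) :
    shiftedFactorial f (β - γ - k) (2 * k + 1) * shiftedFactorial f (β + γ) k *
        symmFactorial f x α k =
      shiftedFactorial f 1 k * ∑ q ∈ antidiagonal k,
        expansionCoeff f α β γ q.1 q.2 * (symmFactorial f x β q.1 * symmFactorial f x γ q.2) := by
  induction k with
  | zero => simp [shiftedFactorial, symmFactorial, expansionCoeff, differenceWeight,
      parameterWeight]
  | succ k ih =>
    have hne : ∀ i ≤ k, f (1 + i) ≠ 0 := fun i hi =>
      prod_ne_zero_iff.mp hk i (mem_range.mpr (Nat.lt_succ_of_le hi))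
    rw [shiftedFactorial_succ] at hk
    rw [shiftedFactorial_window_succ, shiftedFactorial_succ f (β + γ), symmFactorial_succ,
      shiftedFactorial_succ f 1, mul_assoc (shiftedFactorial f 1 k),
      hf.sum_expansionCoeff_succ α β γ x hne, ← mul_assoc (shiftedFactorial f 1 k),
      ← ih (left_ne_zero_of_mul hk)]
    ring

end Expansion

section Summation

variable {A K : Type*} [CommRing A] [Field K] {f : A → K}

lemma shiftedFactorial_ne_zero_of_le {u : A} {m k : ℕ} (hmk : m ≤ k)
    (hk : shiftedFactorial f u k ≠ 0) : shiftedFactorial f u m ≠ 0 :=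
  ne_zero_of_dvd_ne_zero hk (prod_dvd_prod_of_subset _ _ _ (range_mono hmk))

lemma shiftedFactorial_reflect_eq_div (hodd : ∀ u, f (-u) = -f u) {u : A} {n m : ℕ}
    (hu : shiftedFactorial f u (n + m) ≠ 0) :
    shiftedFactorial f (1 - (n + m) - u) n =
      (-1) ^ n * shiftedFactorial f u (n + m) / shiftedFactorial f u m :=
  eq_div_of_mul_eq (shiftedFactorial_ne_zero_of_le (Nat.le_add_left m n) hu)
    (shiftedFactorial_reflect_mul hodd u n m)

lemma shiftedFactorial_eq_div {u : A} {n m : ℕ} (hu : shiftedFactorial f u (n + m) ≠ 0) :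
    shiftedFactorial f u n = shiftedFactorial f u (n + m) / shiftedFactorial f (u + n) m := by
  rw [shiftedFactorial_add] at hu ⊢
  rw [mul_div_cancel_right₀ _ (right_ne_zero_of_mul hu)]

/-- The very-well-poised sum for an arbitrary bracket; at `f = br τ r` it is definitionally
`Vsum τ r u₀ us N`. -/
def veryWellPoisedSum (f : A → K) (u₀ : A) (us : List A) (N : ℕ) : K :=
  ∑ j ∈ range (N + 1),
    f (u₀ + 2 * j) / f u₀ * (shiftedFactorial f u₀ j / shiftedFactorial f 1 j) *
      (us.map fun u => shiftedFactorial f u j / shiftedFactorial f (u₀ + 1 - u) j).prod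

lemma veryWellPoised_term_eq_expansionCoeff (hodd : ∀ u, f (-u) = -f u) {α β γ x : A} {n m : ℕ}
    (h1 : shiftedFactorial f 1 (n + m) ≠ 0) (hδ : shiftedFactorial f (β - γ + 1) (n + m) ≠ 0)
    (hαβ_sub : shiftedFactorial f (α - β) (n + m) ≠ 0)
    (hαβ_add : shiftedFactorial f (α + β) (n + m) ≠ 0)
    (hγ_add : shiftedFactorial f (γ + x) (n + m) ≠ 0)
    (hγ_sub : shiftedFactorial f (γ - x) (n + m) ≠ 0) :
    f (β - γ - (n + m) + 2 * n) / f (β - γ - (n + m)) *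
        (shiftedFactorial f (β - γ - (n + m)) n / shiftedFactorial f 1 n) *
        (shiftedFactorial f (-(n + m)) n / shiftedFactorial f (β - γ + 1) n *
          (shiftedFactorial f (α - γ) n / shiftedFactorial f (1 - (n + m) - (α - β)) n) *
          (shiftedFactorial f (-α - γ + 1 - (n + m)) n / shiftedFactorial f (α + β) n) *
          (shiftedFactorial f (β + x) n / shiftedFactorial f (1 - (n + m) - (γ + x)) n) *
          (shiftedFactorial f (β - x) n / shiftedFactorial f (1 - (n + m) - (γ - x)) n)) =
      (-1) ^ (n + m) * shiftedFactorial f 1 (n + m) / (f (β - γ - (n + m)) *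
        shiftedFactorial f (β - γ + 1) (n + m) * shiftedFactorial f (α - β) (n + m) *
        shiftedFactorial f (α + β) (n + m) * symmFactorial f x γ (n + m)) *
        (expansionCoeff f α β γ n m * (symmFactorial f x β n * symmFactorial f x γ m)) := by
  have hneg : shiftedFactorial f (-(n + m)) n =
      (-1) ^ n * shiftedFactorial f 1 (n + m) / shiftedFactorial f 1 m := by
    rw [← shiftedFactorial_reflect_eq_div hodd h1]
    ring_nf
  have hαγ : shiftedFactorial f (-α - γ + 1 - (n + m)) n =
      (-1) ^ n * shiftedFactorial f (α + γ + m) n := by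
    rw [← shiftedFactorial_reflect hodd]
    ring_nf
  have hshift : β - γ - (n + m) + 2 * n = β - γ + n - m := by ring
  have hδ_shift : β - γ + 1 + n = β - γ + n + 1 := by ring
  rw [hneg, hαγ, shiftedFactorial_reflect_eq_div hodd hαβ_sub,
    shiftedFactorial_reflect_eq_div hodd hγ_add, shiftedFactorial_reflect_eq_div hodd hγ_sub,
    shiftedFactorial_eq_div hδ, shiftedFactorial_eq_div hαβ_add, hshift, hδ_shift]
  simp only [expansionCoeff, differenceWeight, parameterWeight, symmFactorial, pow_add,
    div_eq_mul_inv, mul_inv, inv_inv]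
  rcases neg_one_pow_eq_or K n with hn | hn <;> rcases neg_one_pow_eq_or K m with hm | hm <;>
    rw [hn, hm] <;> ring

lemma veryWellPoisedSum_eq_sum_expansionCoeff (hodd : ∀ u, f (-u) = -f u) {α β γ x : A} {k : ℕ}
    (h1 : shiftedFactorial f 1 k ≠ 0) (hδ : shiftedFactorial f (β - γ + 1) k ≠ 0)
    (hαβ_sub : shiftedFactorial f (α - β) k ≠ 0) (hαβ_add : shiftedFactorial f (α + β) k ≠ 0)
    (hγ_add : shiftedFactorial f (γ + x) k ≠ 0) (hγ_sub : shiftedFactorial f (γ - x) k ≠ 0) :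
    veryWellPoisedSum f (β - γ - k) [-(k : A), α - γ, -α - γ + 1 - k, β + x, β - x] k =
      (-1) ^ k * shiftedFactorial f 1 k / (f (β - γ - k) *
        shiftedFactorial f (β - γ + 1) k * shiftedFactorial f (α - β) k *
        shiftedFactorial f (α + β) k * symmFactorial f x γ k) *
        ∑ q ∈ antidiagonal k, expansionCoeff f α β γ q.1 q.2 *
          (symmFactorial f x β q.1 * symmFactorial f x γ q.2) := by
  rw [mul_sum, Nat.sum_antidiagonal_eq_sum_range_succ_mk, veryWellPoisedSum]
  refine sum_congr rfl fun n hn => ?_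
  obtain ⟨m, rfl⟩ := Nat.exists_eq_add_of_le (Nat.lt_succ_iff.mp (mem_range.mp hn))
  have hterm := veryWellPoised_term_eq_expansionCoeff hodd h1 hδ hαβ_sub hαβ_add hγ_add hγ_sub
  rw [Nat.add_sub_cancel_left]
  push_cast
  rw [← hterm]
  have eδ : β - γ - (n + m) + 1 - -(n + m) = β - γ + 1 := by ring
  have eαβ_sub : β - γ - (n + m) + 1 - (α - γ) = 1 - (n + m) - (α - β) := by ring
  have eαβ_add : β - γ - (n + m) + 1 - (-α - γ + 1 - (n + m)) = α + β := by ring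
  have eγ_add : β - γ - (n + m) + 1 - (β + x) = 1 - (n + m) - (γ + x) := by ring
  have eγ_sub : β - γ - (n + m) + 1 - (β - x) = 1 - (n + m) - (γ - x) := by ring
  simp only [List.map_cons, List.map_nil, List.prod_cons, List.prod_nil, eδ, eαβ_sub, eαβ_add,
    eγ_add, eγ_sub, mul_one, mul_assoc]

end Summation

section Jackson

variable {A K : Type*} [Field A] [NeZero (2 : A)] [Field K] {f : A → K}

theorem elliptic_jackson_general (hf : ThreeTermRelation f) (k : ℕ) (α β γ x : A)
    (h0 : f (β - γ - k) ≠ 0) (h1 : shiftedFactorial f 1 k ≠ 0)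
    (hδ : shiftedFactorial f (β - γ + 1) k ≠ 0)
    (hαβ_sub : shiftedFactorial f (α - β) k ≠ 0) (hαβ_add : shiftedFactorial f (α + β) k ≠ 0)
    (hγ_add : shiftedFactorial f (γ + x) k ≠ 0) (hγ_sub : shiftedFactorial f (γ - x) k ≠ 0) :
    veryWellPoisedSum f (β - γ - k) [-(k : A), α - γ, -α - γ + 1 - k, β + x, β - x] k =
      shiftedFactorial f (γ - β) k * shiftedFactorial f (γ + β) k *
          shiftedFactorial f (α + x) k * shiftedFactorial f (α - x) k /
        (shiftedFactorial f (α - β) k * shiftedFactorial f (α + β) k *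
          shiftedFactorial f (γ + x) k * shiftedFactorial f (γ - x) k) := by
  have hwindow : shiftedFactorial f (β - γ - k) (2 * k + 1) =
      f (β - γ - k) * ((-1) ^ k * shiftedFactorial f (γ - β) k) *
        shiftedFactorial f (β - γ + 1) k := by
    have hreflect : 1 - k - (γ - β) = β - γ - k + 1 := by ring
    have hupper : β - γ - k + 1 + k = β - γ + 1 := by ring
    rw [← shiftedFactorial_reflect hf.odd, two_mul, shiftedFactorial_succ', shiftedFactorial_add,
      hreflect, hupper, mul_assoc]
  have hsign : ((-1 : K) ^ k) * (-1) ^ k = 1 := by rw [← mul_pow]; simp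
  rw [veryWellPoisedSum_eq_sum_expansionCoeff hf.odd h1 hδ hαβ_sub hαβ_add hγ_add hγ_sub,
    mul_div_right_comm, mul_assoc, ← hf.symmFactorial_expansion α β γ x h1, hwindow, add_comm γ β,
    symmFactorial, symmFactorial]
  field_simp
  linear_combination shiftedFactorial f (γ - β) k * shiftedFactorial f (β + γ) k *
    (shiftedFactorial f (α + x) k * shiftedFactorial f (α - x) k) * hsign

end Jackson

section QPochhammer

variable {F : Type*} [Field F] {p : F}

/-- The `q`-Pochhammer symbol `(p; p)_n`. -/
def qPochhammer (p : F) (n : ℕ) : F := ∏ j ∈ range n, (1 - p ^ (j + 1))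

/-- The reciprocal of `(p; p)_m`, extended by `0` to negative `m` so that its recurrence
`qPochhammerInv_mul` holds on all of `ℤ`. -/
def qPochhammerInv (p : F) (m : ℤ) : F := if m < 0 then 0 else (qPochhammer p m.toNat)⁻¹

lemma qPochhammerInv_of_neg (p : F) {m : ℤ} (hm : m < 0) : qPochhammerInv p m = 0 := if_pos hm

lemma qPochhammerInv_natCast (p : F) (n : ℕ) : qPochhammerInv p n = (qPochhammer p n)⁻¹ := by
  simp [qPochhammerInv]

lemma qPochhammerInv_mul (hp : ∀ j : ℕ, 1 - p ^ (j + 1) ≠ 0) (m : ℤ) :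
    qPochhammerInv p m * (1 - p ^ m) = qPochhammerInv p (m - 1) := by
  rcases lt_trichotomy m 0 with hm | rfl | hm
  · rw [qPochhammerInv_of_neg p hm, qPochhammerInv_of_neg p (by lia), zero_mul]
  · rw [qPochhammerInv_of_neg p (m := 0 - 1) (by lia), zpow_zero, sub_self, mul_zero]
  · obtain ⟨n, rfl⟩ : ∃ n : ℕ, m = (n + 1 : ℕ) := ⟨(m - 1).toNat, by lia⟩
    rw [Nat.cast_succ, add_sub_cancel_right, ← Nat.cast_succ, qPochhammerInv_natCast,
      qPochhammerInv_natCast, zpow_natCast, qPochhammer, prod_range_succ, mul_inv, mul_assoc,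
      inv_mul_cancel₀ (hp n), mul_one, qPochhammer]

/-- The `q`-binomial coefficient `[2N choose N + n]`, which vanishes unless `|n| ≤ N`. -/
def centralQBinom (p : F) (N : ℕ) (n : ℤ) : F :=
  qPochhammer p (2 * N) * (qPochhammerInv p (N - n) * qPochhammerInv p (N + n))

lemma centralQBinom_zero (p : F) (n : ℤ) : centralQBinom p 0 n = if n = 0 then 1 else 0 := by
  rcases lt_trichotomy n 0 with hn | rfl | hn
  · simp [centralQBinom, hn.ne, qPochhammerInv_of_neg p hn]
  · simp [centralQBinom, qPochhammer, qPochhammerInv]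
  · simp [centralQBinom, hn.ne', qPochhammerInv_of_neg p (neg_lt_zero.mpr hn)]

lemma centralQBinom_succ (hp0 : p ≠ 0) (hp : ∀ j : ℕ, 1 - p ^ (j + 1) ≠ 0) (N : ℕ) (n : ℤ) :
    centralQBinom p (N + 1) n = (1 + p ^ (2 * N + 1)) * centralQBinom p N n +
      p ^ (N + 1 - n) * centralQBinom p N (n - 1) +
      p ^ (N + 1 + n) * centralQBinom p N (n + 1) := by
  have hlower : qPochhammerInv p (N - n) =
      qPochhammerInv p (N + 1 - n) * (1 - p ^ (N + 1 - n)) := by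
    rw [qPochhammerInv_mul hp]
    ring_nf
  have hlower' : qPochhammerInv p (N - (n + 1)) =
      qPochhammerInv p (N - n) * (1 - p ^ (N - n)) := by
    rw [qPochhammerInv_mul hp]
    ring_nf
  have hupper : qPochhammerInv p (N + n) =
      qPochhammerInv p (N + 1 + n) * (1 - p ^ (N + 1 + n)) := by
    rw [qPochhammerInv_mul hp]
    ring_nf
  have hupper' : qPochhammerInv p (N + (n - 1)) =
      qPochhammerInv p (N + n) * (1 - p ^ (N + n)) := by
    rw [qPochhammerInv_mul hp]
    ring_nf
  have hdouble : qPochhammer p (2 * (N + 1)) =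
      qPochhammer p (2 * N) * (1 - p ^ (2 * N + 1)) * (1 - p ^ (2 * N + 2)) := by
    rw [qPochhammer, Nat.mul_succ, prod_range_succ, prod_range_succ, qPochhammer]
  have hprod : p ^ (2 * N) = p ^ (N - n) * p ^ (N + n) := by
    rw [← zpow_add₀ hp0, ← zpow_natCast]
    congr 1
    push_cast
    ring
  have hlow_exp : (N + 1 - n : ℤ) = N - n + 1 := by ring
  have hup_exp : (N + 1 + n : ℤ) = N + n + 1 := by ring
  have hlow_idx : (N - (n - 1) : ℤ) = N + 1 - n := by ring
  have hup_idx : (N + (n + 1) : ℤ) = N + 1 + n := by ring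
  simp only [centralQBinom, Nat.cast_succ, hlow_idx, hup_idx, hlower', hupper', hlower, hupper,
    hdouble, pow_add p (2 * N), hprod]
  rw [hlow_exp, hup_exp, zpow_add_one₀ hp0, zpow_add_one₀ hp0]
  ring

end QPochhammer

section TripleProduct

variable {F : Type*} [Field F] {p z : F}

/-- The term `(-1)^n p^{n(n-1)/2} z^n` of the series side of Jacobi's triple product. -/
def tripleTerm (p z : F) (n : ℤ) : F := (-1) ^ n * p ^ (n * (n - 1) / 2) * z ^ n

lemma tripleTerm_succ (hp0 : p ≠ 0) (hz : z ≠ 0) (n : ℤ) :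
    tripleTerm p z (n + 1) = -(p ^ n * z * tripleTerm p z n) := by
  have hexp : (n + 1) * (n + 1 - 1) / 2 = n * (n - 1) / 2 + n := by
    rw [← Int.add_mul_ediv_right _ _ two_ne_zero]
    ring_nf
  rw [tripleTerm, tripleTerm, hexp, zpow_add₀ hp0, zpow_add_one₀ hz,
    zpow_add_one₀ (neg_ne_zero.mpr one_ne_zero)]
  ring

lemma tripleTerm_neg (hp0 : p ≠ 0) (n : ℤ) :
    tripleTerm p z (-n) = tripleTerm p (p / z) n := by
  have hexp : -n * (-n - 1) / 2 = n * (n - 1) / 2 + n := by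
    rw [← Int.add_mul_ediv_right _ _ two_ne_zero]
    ring_nf
  have hsign : ((-1 : F) ^ (-n)) = (-1) ^ n := by
    rw [zpow_neg, ← inv_zpow, inv_neg_one]
  rw [tripleTerm, tripleTerm, hexp, hsign, zpow_add₀ hp0, div_zpow, zpow_neg]
  ring

lemma centralQBinom_succ_mul_tripleTerm (hp0 : p ≠ 0) (hp : ∀ j : ℕ, 1 - p ^ (j + 1) ≠ 0)
    (hz : z ≠ 0) (N : ℕ) (n : ℤ) :
    centralQBinom p (N + 1) n * tripleTerm p z n =
      (1 + p ^ (2 * N + 1)) * (centralQBinom p N n * tripleTerm p z n) -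
      z * p ^ N * (centralQBinom p N (n - 1) * tripleTerm p z (n - 1)) -
      p ^ (N + 1) / z * (centralQBinom p N (n + 1) * tripleTerm p z (n + 1)) := by
  have hpn := zpow_ne_zero n hp0
  have hpred : p ^ n * z * tripleTerm p z (n - 1) = -(p * tripleTerm p z n) := by
    have h := tripleTerm_succ hp0 hz (n - 1)
    rw [sub_add_cancel, zpow_sub_one₀ hp0] at h
    rw [h]
    field_simp
  rw [centralQBinom_succ hp0 hp, tripleTerm_succ hp0 hz n]
  simp only [zpow_sub₀ hp0, zpow_add₀ hp0, zpow_natCast, zpow_one]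
  field_simp
  linear_combination p ^ N * centralQBinom p N (n - 1) * hpred

theorem hasSum_finite_triple_product [TopologicalSpace F] [IsTopologicalRing F] (hp0 : p ≠ 0)
    (hp : ∀ j : ℕ, 1 - p ^ (j + 1) ≠ 0) (hz : z ≠ 0) (N : ℕ) :
    HasSum (fun n : ℤ => centralQBinom p N n * tripleTerm p z n)
      (∏ j ∈ range N, ((1 - z * p ^ j) * (1 - p ^ (j + 1) / z))) := by
  induction N with
  | zero =>
    have hterm (n : ℤ) : centralQBinom p 0 n * tripleTerm p z n = if n = 0 then 1 else 0 := by
      rw [centralQBinom_zero]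
      split_ifs with hn
      · simp [hn, tripleTerm]
      · rw [zero_mul]
    simpa only [hterm, prod_range_zero] using hasSum_ite_eq (0 : ℤ) (1 : F)
  | succ N ih =>
    have hdown := (Equiv.subRight (1 : ℤ)).hasSum_iff.mpr ih
    have hup := (Equiv.addRight (1 : ℤ)).hasSum_iff.mpr ih
    have hprod (P : F) : P * ((1 - z * p ^ N) * (1 - p ^ (N + 1) / z)) =
        (1 + p ^ (2 * N + 1)) * P - z * p ^ N * P - p ^ (N + 1) / z * P := by
      field_simp
      ring
    simp only [prod_range_succ _ N, hprod, centralQBinom_succ_mul_tripleTerm hp0 hp hz]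
    exact ((ih.mul_left _).sub (hdown.mul_left _)).sub (hup.mul_left _)

end TripleProduct

section JacobiTripleProduct

open Filter Topology

variable {p z : ℂ}

lemma one_sub_pow_succ_ne_zero (hp : ‖p‖ < 1) (j : ℕ) : 1 - p ^ (j + 1) ≠ 0 := by
  intro h
  have hlt : ‖p ^ (j + 1)‖ < 1 := by
    rw [norm_pow]
    exact pow_lt_one₀ (norm_nonneg p) hp j.succ_ne_zero
  rw [← sub_eq_zero.mp h, norm_one] at hlt
  exact lt_irrefl 1 hlt

lemma tprod_one_sub_pow_succ_ne_zero (hp : ‖p‖ < 1) : ∏' j : ℕ, (1 - p ^ (j + 1)) ≠ 0 := by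
  have hsum : Summable fun j : ℕ => ‖-p ^ (j + 1)‖ := by
    simpa using (summable_nat_add_iff 1).mpr (summable_geometric_of_lt_one (norm_nonneg _) hp)
  simp only [sub_eq_add_neg]
  refine tprod_one_add_ne_zero_of_summable (fun j => ?_) hsum
  rw [← sub_eq_add_neg]
  exact one_sub_pow_succ_ne_zero hp j

lemma tendsto_qPochhammer (hp : ‖p‖ < 1) :
    Tendsto (qPochhammer p) atTop (𝓝 (∏' j : ℕ, (1 - p ^ (j + 1)))) :=
  (ModularForm.multipliable_one_sub_pow hp).tendsto_prod_tprod_nat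

lemma tendsto_qPochhammerInv (hp : ‖p‖ < 1) :
    Tendsto (qPochhammerInv p) atTop (𝓝 (∏' j : ℕ, (1 - p ^ (j + 1)))⁻¹) := by
  have htoNat : Tendsto Int.toNat atTop atTop := tendsto_atTop_atTop.mpr fun n =>
    ⟨n, fun m hm => by lia⟩
  refine (((tendsto_qPochhammer hp).comp htoNat).inv₀
    (tprod_one_sub_pow_succ_ne_zero hp)).congr' ?_
  filter_upwards [eventually_ge_atTop (0 : ℤ)] with m hm
  exact (if_neg hm.not_gt).symm

lemma exists_norm_qPochhammerInv_le (hp : ‖p‖ < 1) : ∃ C, ∀ m, ‖qPochhammerInv p m‖ ≤ C := by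
  have hlim := (tendsto_qPochhammer hp).inv₀ (tprod_one_sub_pow_succ_ne_zero hp)
  obtain ⟨C, hC⟩ := (Metric.isBounded_range_of_tendsto _ hlim).exists_norm_le
  refine ⟨C, fun m => ?_⟩
  rw [qPochhammerInv]
  split_ifs
  · exact norm_zero.trans_le ((norm_nonneg _).trans (hC _ ⟨0, rfl⟩))
  · exact hC _ ⟨_, rfl⟩

lemma exists_norm_centralQBinom_le (hp : ‖p‖ < 1) : ∃ C, ∀ N n, ‖centralQBinom p N n‖ ≤ C := by
  obtain ⟨C, hC⟩ := (Metric.isBounded_range_of_tendsto _ (tendsto_qPochhammer hp)).exists_norm_le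
  obtain ⟨D, hD⟩ := exists_norm_qPochhammerInv_le hp
  have hC0 : 0 ≤ C := (norm_nonneg _).trans (hC _ ⟨0, rfl⟩)
  have hD0 : 0 ≤ D := (norm_nonneg _).trans (hD 0)
  refine ⟨C * (D * D), fun N n => ?_⟩
  rw [centralQBinom, norm_mul, norm_mul]
  gcongr
  exacts [hC _ ⟨_, rfl⟩, hD _, hD _]

lemma tendsto_centralQBinom (hp : ‖p‖ < 1) (n : ℤ) :
    Tendsto (fun N => centralQBinom p N n) atTop (𝓝 (∏' j : ℕ, (1 - p ^ (j + 1)))⁻¹) := by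
  have hdouble := (tendsto_qPochhammer hp).comp (tendsto_id.const_mul_atTop' two_pos)
  have hlower := (tendsto_qPochhammerInv hp).comp
    (tendsto_atTop_add_const_right _ (-n) (tendsto_natCast_atTop_atTop (R := ℤ)))
  have hupper := (tendsto_qPochhammerInv hp).comp
    (tendsto_atTop_add_const_right _ n (tendsto_natCast_atTop_atTop (R := ℤ)))
  have hlim := hdouble.mul (hlower.mul hupper)
  rwa [mul_inv_cancel_left₀ (tprod_one_sub_pow_succ_ne_zero hp)] at hlim

lemma summable_tripleTerm_natCast (hp : ‖p‖ < 1) (hp0 : p ≠ 0) (hz : z ≠ 0) :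
    Summable fun n : ℕ => tripleTerm p z n := by
  have hne (n : ℕ) : tripleTerm p z n ≠ 0 := by simp [tripleTerm, hp0, hz, zpow_ne_zero]
  refine summable_of_ratio_test_tendsto_lt_one zero_lt_one (.of_forall hne) ?_
  have hratio (n : ℕ) : ‖p‖ ^ n * ‖z‖ = ‖tripleTerm p z (n + 1 : ℕ)‖ / ‖tripleTerm p z n‖ := by
    rw [Nat.cast_succ, tripleTerm_succ hp0 hz, norm_neg, norm_mul,
      mul_div_cancel_right₀ _ (norm_ne_zero_iff.mpr (hne n)), norm_mul, zpow_natCast, norm_pow]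
  simpa only [zero_mul, hratio] using
    (tendsto_pow_atTop_nhds_zero_of_lt_one (norm_nonneg p) hp).mul_const ‖z‖

lemma summable_tripleTerm (hp : ‖p‖ < 1) (hp0 : p ≠ 0) (hz : z ≠ 0) :
    Summable (tripleTerm p z) := by
  refine .of_nat_of_neg (summable_tripleTerm_natCast hp hp0 hz) ?_
  simpa only [tripleTerm_neg hp0] using summable_tripleTerm_natCast hp hp0 (div_ne_zero hp0 hz)

lemma multipliable_one_sub_mul_pow (hp : ‖p‖ < 1) (w : ℂ) :
    Multipliable fun j : ℕ => 1 - w * p ^ j := by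
  simp only [sub_eq_add_neg]
  refine multipliable_one_add_of_summable ?_
  simpa using (summable_geometric_of_lt_one (norm_nonneg p) hp).mul_left ‖w‖

lemma multipliable_one_sub_mul_pow_mul (hp : ‖p‖ < 1) (z : ℂ) :
    Multipliable fun j : ℕ => (1 - z * p ^ j) * (1 - p ^ (j + 1) / z) := by
  have hquot (j : ℕ) : p ^ (j + 1) / z = p / z * p ^ j := by ring
  simp only [hquot]
  exact (multipliable_one_sub_mul_pow hp z).mul (multipliable_one_sub_mul_pow hp (p / z))

theorem Theta_eq_tsum_tripleTerm (hp : ‖p‖ < 1) (hp0 : p ≠ 0) (hz : z ≠ 0) :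
    Theta p z = ∑' n, tripleTerm p z n := by
  have hmul := multipliable_one_sub_mul_pow_mul hp z
  have hTheta : Theta p z = (∏' j : ℕ, (1 - z * p ^ j) * (1 - p ^ (j + 1) / z)) *
      ∏' j : ℕ, (1 - p ^ (j + 1)) :=
    hmul.tprod_mul (ModularForm.multipliable_one_sub_pow hp)
  obtain ⟨C, hC⟩ := exists_norm_centralQBinom_le hp
  have hlim : Tendsto (fun N => ∑' n, centralQBinom p N n * tripleTerm p z n) atTop
      (𝓝 (∑' n, (∏' j : ℕ, (1 - p ^ (j + 1)))⁻¹ * tripleTerm p z n)) := by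
    refine tendsto_tsum_of_dominated_convergence ((summable_tripleTerm hp hp0 hz).norm.mul_left C)
      (fun n => (tendsto_centralQBinom hp n).mul_const _) (.of_forall fun N n => ?_)
    rw [norm_mul]
    gcongr
    exact hC N n
  have hfinite (N : ℕ) :=
    (hasSum_finite_triple_product hp0 (one_sub_pow_succ_ne_zero hp) hz N).tsum_eq
  simp only [hfinite, tsum_mul_left] at hlim
  rw [hTheta, tendsto_nhds_unique hmul.tendsto_prod_tprod_nat hlim, mul_comm,
    mul_inv_cancel_left₀ (tprod_one_sub_pow_succ_ne_zero hp)]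

end JacobiTripleProduct

section GaussianSeries

variable {σ : ℂ}

/-- The theta series `∑ₙ exp(πiσ(s+n)²)`, with the Gaussian prefactor kept inside the sum. -/
def gaussianSeries (σ s : ℂ) : ℂ := ∑' n : ℤ, cexp (Real.pi * I * σ * (s + n) ^ 2)

/-- The alternating theta series `∑ₙ (-1)ⁿ exp(πiσ(s+n)²)`. -/
def altGaussianSeries (σ s : ℂ) : ℂ :=
  ∑' n : ℤ, (-1) ^ n * cexp (Real.pi * I * σ * (s + n) ^ 2)

lemma summable_norm_gaussianSeries_term (hσ : 0 < σ.im) (s : ℂ) :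
    Summable fun n : ℤ => ‖cexp (Real.pi * I * σ * (s + n) ^ 2)‖ := by
  have hterm (n : ℤ) : cexp (Real.pi * I * σ * s ^ 2) * jacobiTheta₂_term n (σ * s) σ =
      cexp (Real.pi * I * σ * (s + n) ^ 2) := by
    rw [jacobiTheta₂_term, ← Complex.exp_add]
    ring_nf
  exact (((summable_jacobiTheta₂_term_iff (σ * s) σ).mpr hσ).mul_left _).norm.congr
    fun n => congrArg norm (hterm n)

lemma summable_norm_altGaussianSeries_term (hσ : 0 < σ.im) (s : ℂ) :
    Summable fun n : ℤ => ‖(-1) ^ n * cexp (Real.pi * I * σ * (s + n) ^ 2)‖ := by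
  simpa only [norm_mul, norm_zpow, norm_neg, norm_one, one_zpow, one_mul] using
    summable_norm_gaussianSeries_term hσ s

lemma gaussianSeries_add_one (σ s : ℂ) : gaussianSeries σ (s + 1) = gaussianSeries σ s := by
  refine (tsum_congr fun n => ?_).trans
    ((Equiv.addRight (1 : ℤ)).tsum_eq fun n : ℤ => cexp (Real.pi * I * σ * (s + n) ^ 2))
  simp only [Equiv.coe_addRight, Int.cast_add, Int.cast_one]
  ring_nf

/-- The parametrization of `ℤ × ℤ` by half-sum and half-difference: pairs with even difference are
`(a + b, a - b)`, those with odd difference `(a + b + 1, a - b)`. -/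
def parityMap : (ℤ × ℤ) ⊕ (ℤ × ℤ) → ℤ × ℤ
  | .inl q => (q.1 + q.2, q.1 - q.2)
  | .inr q => (q.1 + q.2 + 1, q.1 - q.2)

lemma parityMap_bijective : Function.Bijective parityMap := by
  constructor
  · rintro (⟨a, b⟩ | ⟨a, b⟩) (⟨c, d⟩ | ⟨c, d⟩) h <;>
      simp only [parityMap, Prod.mk.injEq] at h <;> simp <;> lia
  · rintro ⟨m, n⟩
    rcases Int.even_or_odd' (m - n) with ⟨l, h | h⟩
    · exact ⟨.inl (n + l, l), by simp only [parityMap, Prod.mk.injEq]; lia⟩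
    · exact ⟨.inr (n + l, l), by simp only [parityMap, Prod.mk.injEq]; lia⟩

lemma tsum_eq_tsum_even_add_tsum_odd {f : ℤ × ℤ → ℂ} (hf : Summable f) :
    ∑' q, f q = ∑' q : ℤ × ℤ, f (q.1 + q.2, q.1 - q.2) +
      ∑' q : ℤ × ℤ, f (q.1 + q.2 + 1, q.1 - q.2) := by
  have hsum : Summable (f ∘ parityMap) := hf.comp_injective parityMap_bijective.injective
  rw [← (Equiv.ofBijective _ parityMap_bijective).tsum_eq]
  exact (hsum.comp_injective Sum.inl_injective).tsum_sum (hsum.comp_injective Sum.inr_injective)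

theorem altGaussianSeries_add_mul_sub (hσ : 0 < σ.im) (b x : ℂ) :
    altGaussianSeries σ (b + x) * altGaussianSeries σ (b - x) =
      gaussianSeries (2 * σ) b * gaussianSeries (2 * σ) x -
        gaussianSeries (2 * σ) (b + 1 / 2) * gaussianSeries (2 * σ) (x + 1 / 2) := by
  have halt := summable_norm_altGaussianSeries_term hσ
  have hdouble := summable_norm_gaussianSeries_term (σ := 2 * σ) (by simpa using hσ)
  simp only [altGaussianSeries, gaussianSeries]
  rw [tsum_mul_tsum_of_summable_norm (halt _) (halt _),
    tsum_mul_tsum_of_summable_norm (hdouble _) (hdouble _),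
    tsum_mul_tsum_of_summable_norm (hdouble _) (hdouble _),
    tsum_eq_tsum_even_add_tsum_odd (summable_mul_of_summable_norm (halt _) (halt _))]
  refine Eq.trans ?_ (sub_eq_add_neg _ _).symm
  rw [← tsum_neg]
  congr 1 <;> refine tsum_congr fun q => ?_ <;>
    rw [mul_mul_mul_comm, ← zpow_add₀ (neg_ne_zero.mpr one_ne_zero), ← Complex.exp_add,
      ← Complex.exp_add]
  · rw [Even.neg_one_zpow ⟨q.1, by ring⟩, one_mul]
    push_cast
    ring_nf
  · rw [Odd.neg_one_zpow ⟨q.1, by ring⟩, neg_one_mul]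
    push_cast
    ring_nf

end GaussianSeries

section Bracket

variable {τ : ℂ} {r : ℝ}

lemma xp_eq_cexp (τ : ℂ) (r : ℝ) (s : ℂ) :
    xp τ r s = cexp (Real.pi * I * (-τ)⁻¹ * (s / r)) := by
  rw [xp]
  ring_nf

lemma tripleTerm_cexp (σ s : ℂ) (n : ℤ) :
    tripleTerm (cexp (Real.pi * I * σ * 2)) (cexp (Real.pi * I * σ * (2 * s))) n =
      cexp (-(Real.pi * I * σ * (s - 1 / 2) ^ 2)) *
        ((-1) ^ n * cexp (Real.pi * I * σ * (s - 1 / 2 + n) ^ 2)) := by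
  have hhalf : ((n * (n - 1) / 2 : ℤ) : ℂ) = n * (n - 1) / 2 := by
    rw [Int.cast_div n.even_mul_pred_self.two_dvd two_ne_zero]
    push_cast
    rfl
  rw [tripleTerm, ← Complex.exp_int_mul, ← Complex.exp_int_mul, hhalf, mul_assoc,
    ← Complex.exp_add, mul_left_comm (cexp _), ← Complex.exp_add]
  ring_nf

lemma br_eq_altGaussianSeries (hτ : 0 < τ.im) (hr : r ≠ 0) (u : ℂ) :
    br τ r u = cexp (-(Real.pi * I * (-τ)⁻¹ / 4)) * altGaussianSeries (-τ)⁻¹ (u / r - 1 / 2) := by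
  have hr' : (r : ℂ) ≠ 0 := ofReal_ne_zero.mpr hr
  have hnome : ‖cexp (Real.pi * I * (-τ)⁻¹ * 2)‖ < 1 := by
    have hcomm : Real.pi * I * (-τ)⁻¹ * 2 = 2 * Real.pi * I * (-τ)⁻¹ := by ring
    rw [hcomm]
    exact UpperHalfPlane.norm_exp_two_pi_I_lt_one
      ⟨(-τ)⁻¹, UpperHalfPlane.im_inv_neg_coe_pos ⟨τ, hτ⟩⟩
  rw [br, xp_eq_cexp, xp_eq_cexp, xp_eq_cexp, mul_div_cancel_right₀ 2 hr', mul_div_assoc 2 u,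
    Theta_eq_tsum_tripleTerm hnome (exp_ne_zero _) (exp_ne_zero _)]
  simp only [tripleTerm_cexp]
  rw [tsum_mul_left, ← mul_assoc, ← Complex.exp_add, altGaussianSeries]
  ring_nf

theorem br_add_mul_br_sub (hτ : 0 < τ.im) (hr : r ≠ 0) :
    ∃ A B : ℂ → ℂ, ∀ a x, br τ r (a + x) * br τ r (a - x) = B a * A x - A a * B x := by
  set σ := (-τ)⁻¹ with hσ
  set c := cexp (-(Real.pi * I * σ / 4)) with hc
  refine ⟨fun a => c * gaussianSeries (2 * σ) (a / r),
    fun a => c * gaussianSeries (2 * σ) (a / r + 1 / 2), fun a x => ?_⟩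
  have hhalf : gaussianSeries (2 * σ) (a / r - 1 / 2) = gaussianSeries (2 * σ) (a / r + 1 / 2) := by
    rw [← gaussianSeries_add_one]
    ring_nf
  rw [br_eq_altGaussianSeries hτ hr, br_eq_altGaussianSeries hτ hr, ← hσ, ← hc, add_div, sub_div,
    add_sub_right_comm, sub_right_comm, mul_mul_mul_comm,
    altGaussianSeries_add_mul_sub (UpperHalfPlane.im_inv_neg_coe_pos ⟨τ, hτ⟩), sub_add_cancel,
    hhalf]
  ring

theorem threeTermRelation_br (hτ : 0 < τ.im) (hr : r ≠ 0) : ThreeTermRelation (br τ r) := by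
  obtain ⟨A, B, hAB⟩ := br_add_mul_br_sub hτ hr
  intro a b c d
  simp only [hAB]
  ring

end Bracket

/-- Elliptic Jackson summation (Frenkel-Turaev). -/
theorem elliptic_jackson (τ : ℂ) (r : ℝ) (hτ : 0 < τ.im) (hr : 0 < r)
    (k : ℕ) (α β γ z : ℂ)
    (h0 : br τ r (β - γ - (k : ℂ)) ≠ 0)
    (h1 : ∀ j ≤ k, brF τ r 1 j ≠ 0)
    (h2 : ∀ ui ∈ [-(k : ℂ), α - γ, -α - γ + 1 - (k : ℂ), β + (r : ℂ) * z, β - (r : ℂ) * z],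
      ∀ j ≤ k, brF τ r (β - γ - (k : ℂ) + 1 - ui) j ≠ 0)
    (h3 : brF τ r (α - β) k ≠ 0) (h4 : brF τ r (α + β) k ≠ 0)
    (h5 : brF τ r (γ + (r : ℂ) * z) k ≠ 0) (h6 : brF τ r (γ - (r : ℂ) * z) k ≠ 0) :
    Vsum τ r (β - γ - (k : ℂ))
        [-(k : ℂ), α - γ, -α - γ + 1 - (k : ℂ), β + (r : ℂ) * z, β - (r : ℂ) * z] k =
      brF τ r (γ - β) k * brF τ r (γ + β) k * brF τ r (α + (r : ℂ) * z) k *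
          brF τ r (α - (r : ℂ) * z) k /
        (brF τ r (α - β) k * brF τ r (α + β) k * brF τ r (γ + (r : ℂ) * z) k *
          brF τ r (γ - (r : ℂ) * z) k) := by
  have hδ : brF τ r (β - γ + 1) k ≠ 0 := by
    convert h2 (-k) (by simp) k le_rfl using 2
    ring
  exact elliptic_jackson_general (threeTermRelation_br hτ hr.ne') k α β γ (r * z) h0
    (h1 k le_rfl) hδ h3 h4 h5 h6

end Ell
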